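/- Let R, Q > 0 and μ ∈ (-1, 1]. Define w : [0,∞) → ℝ by w(r) = 0 for r ∈ [0,R], w(r) = Q(2R)^{2μ}(r−R)/R for r ∈ (R,2R], and w(r) = Q r^{2μ} for r > 2R. Let ψ be the solution of the ODE ψ''(r) = w(r)ψ(r) for all r > 0 with ψ'(0) = 1 and ψ(0) = 0. Then ψ ∈ C²([0,∞)), ψ is positive on (0,∞) with lim_{r→∞} ψ(r) = +∞, ψ' is positive on [0,∞), and ψ'(r)/ψ(r) ∼ √Q · r^μ as r → +∞, i.e. lim_{r→∞} ψ'(r)/(ψ(r)·√Q·r^μ) = 1. -/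

import Mathlib

/-!
Since `w ≥ 0`, the functions `ψ ψ'` and then `ψ'²` increase, so `ψ'` never vanishes, `ψ' ≥ ψ'(0)`,
and `ψ` grows at least linearly. With `σ = √Q r^μ`, the ratio `u = ψ' / (ψ σ)` solves the Riccati
equation `u' = σ (w / σ² - u² - (σ' / σ²) u)`, whose coefficients `w / σ²` and `σ' / σ²` tend to
`1` and `0`. As long as `|u - 1| ≥ δ`, the quantity `(u - 1)²` therefore decreases at rate at least
`δ² σ`; because `∫ σ = ∞`, it must fall below `δ²`, and it cannot come back up.
-/

open Asymptotics Filter Set Topology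

section Trapping

variable {f f' S S' : ℝ → ℝ}

lemma frequently_nonpos_of_deriv_le_neg
    (hf : ∀ᶠ r in atTop, HasDerivAt f (f' r) r) (hS : ∀ᶠ r in atTop, HasDerivAt S (S' r) r)
    (hle : ∀ᶠ r in atTop, 0 ≤ f r → f' r ≤ -S' r) (hST : Tendsto S atTop atTop) :
    ∃ᶠ r in atTop, f r ≤ 0 := by
  by_contra hfreq
  have hpos : ∀ᶠ r in atTop, 0 < f r := by simpa using hfreq
  obtain ⟨a, ha⟩ := eventually_atTop.1 (hf.and (hS.and (hle.and hpos)))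
  have hderiv : ∀ r ∈ Ici a, HasDerivAt (f + S) (f' r + S' r) r := fun r hr =>
    (ha r hr).1.add (ha r hr).2.1
  have hanti : AntitoneOn (f + S) (Ici a) := by
    refine antitoneOn_of_hasDerivWithinAt_nonpos (convex_Ici a)
      (fun r hr => (hderiv r hr).continuousAt.continuousWithinAt)
      (fun r hr => (hderiv r (interior_subset hr)).hasDerivWithinAt) fun r hr => ?_
    obtain ⟨-, -, hle, hpos⟩ := ha r (interior_subset hr)
    linarith [hle hpos.le]
  obtain ⟨r, hSr, har⟩ :=
    ((hST.eventually_gt_atTop (f a + S a)).and (eventually_ge_atTop a)).exists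
  have hsum : f r + S r ≤ f a + S a := hanti self_mem_Ici har har
  linarith [(ha r har).2.2.2]

lemma eventually_nonpos_of_deriv_le_neg
    (hf : ∀ᶠ r in atTop, HasDerivAt f (f' r) r) (hS : ∀ᶠ r in atTop, HasDerivAt S (S' r) r)
    (hS' : ∀ᶠ r in atTop, 0 < S' r) (hle : ∀ᶠ r in atTop, 0 ≤ f r → f' r ≤ -S' r)
    (hST : Tendsto S atTop atTop) : ∀ᶠ r in atTop, f r ≤ 0 := by
  obtain ⟨a, ha⟩ := eventually_atTop.1 (hf.and (hS'.and hle))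
  obtain ⟨b, hab, hfb⟩ := frequently_atTop.1 (frequently_nonpos_of_deriv_le_neg hf hS hle hST) a
  filter_upwards [eventually_ge_atTop b] with r hbr
  refine image_le_of_deriv_right_lt_deriv_boundary (B := 0) (B' := 0)
    (fun x hx => (ha x (hab.trans hx.1)).1.continuousAt.continuousWithinAt)
    (fun x hx => (ha x (hab.trans hx.1)).1.hasDerivWithinAt) hfb
    (fun x => hasDerivAt_const x 0) (fun x hx hfx => ?_) (right_mem_Icc.2 hbr)
  obtain ⟨-, hS'x, hlex⟩ := ha x (hab.trans hx.1)
  exact (hlex hfx.ge).trans_lt (neg_neg_of_pos hS'x)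

end Trapping

section Riccati

lemma two_mul_sub_one_mul_riccati_le {a b u δ : ℝ} (hu : 0 ≤ u) (hb : |b| ≤ 1 / 4)
    (hab : |a - 1 - b| ≤ δ / 4) (hδ : δ ≤ |u - 1|) :
    2 * (u - 1) * (a - u ^ 2 - b * u) ≤ -(u - 1) ^ 2 := by
  have hforcing : (u - 1) * (a - 1 - b) ≤ (u - 1) ^ 2 / 4 := calc
    (u - 1) * (a - 1 - b) ≤ |u - 1| * |a - 1 - b| := (le_abs_self _).trans (abs_mul _ _).le
    _ ≤ |u - 1| * (|u - 1| / 4) := by gcongr; linarith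
    _ = (u - 1) ^ 2 / 4 := by rw [← sq_abs (u - 1)]; ring
  have hdamping : (u - 1) ^ 2 * (3 / 4) ≤ (u - 1) ^ 2 * (u + 1 + b) := by
    gcongr
    linarith [neg_le_of_abs_le hb]
  calc 2 * (u - 1) * (a - u ^ 2 - b * u)
      = 2 * ((u - 1) * (a - 1 - b) - (u - 1) ^ 2 * (u + 1 + b)) := by ring
    _ ≤ -(u - 1) ^ 2 := by linarith

theorem tendsto_one_of_riccati {u a b σ S : ℝ → ℝ}
    (hu : ∀ᶠ r in atTop, HasDerivAt u (σ r * (a r - u r ^ 2 - b r * u r)) r)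
    (hu0 : ∀ᶠ r in atTop, 0 ≤ u r) (ha : Tendsto a atTop (𝓝 1)) (hb : Tendsto b atTop (𝓝 0))
    (hσ : ∀ᶠ r in atTop, 0 < σ r) (hS : ∀ᶠ r in atTop, HasDerivAt S (σ r) r)
    (hST : Tendsto S atTop atTop) : Tendsto u atTop (𝓝 1) := by
  refine Metric.nhds_basis_closedBall.tendsto_right_iff.2 fun δ hδ => ?_
  have hab : Tendsto (fun r => a r - 1 - b r) atTop (𝓝 0) := by
    simpa using (ha.sub_const 1).sub hb
  have hsmall : ∀ {g : ℝ → ℝ} {ε : ℝ}, Tendsto g atTop (𝓝 0) → 0 < ε →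
      ∀ᶠ r in atTop, |g r| ≤ ε := fun hg hε => by
    simpa using Metric.nhds_basis_closedBall.tendsto_right_iff.1 hg _ hε
  have htrap : ∀ᶠ r in atTop, (u r - 1) ^ 2 - δ ^ 2 ≤ 0 := by
    refine eventually_nonpos_of_deriv_le_neg
      (f' := fun r => σ r * (2 * (u r - 1) * (a r - u r ^ 2 - b r * u r)))
      (hu.mono fun r hr => ?_) (hS.mono fun r hr => hr.const_mul (δ ^ 2))
      (hσ.mono fun r hr => by positivity) ?_ (hST.const_mul_atTop (by positivity))
    · refine (((hr.sub_const 1).pow 2).sub_const (δ ^ 2)).congr_deriv ?_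
      push_cast
      ring
    · filter_upwards [hσ, hu0, hsmall hb (by norm_num : (0 : ℝ) < 1 / 4),
        hsmall hab (by positivity : 0 < δ / 4)] with r hσr hur hbr habr hfar
      have hdist : δ ≤ |u r - 1| :=
        (le_abs_self δ).trans (sq_le_sq.1 (sub_nonneg.1 hfar))
      have hdecay := mul_le_mul_of_nonneg_left
        (two_mul_sub_one_mul_riccati_le hur hbr habr hdist) hσr.le
      linarith [mul_nonneg hσr.le hfar]
  filter_upwards [htrap] with r hr
  exact abs_le_of_sq_le_sq (sub_nonpos.1 hr) hδ.le

end Riccati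

/-- `ψ` is a solution on `s` of the stationary Schrödinger equation `ψ'' = w ψ` with derivative
`ψ'`. Derivatives are taken within `s`, hence are one-sided at its endpoints. -/
structure IsSchrodingerSolOn (w ψ ψ' : ℝ → ℝ) (s : Set ℝ) : Prop where
  hasDerivWithinAt : ∀ r ∈ s, HasDerivWithinAt ψ (ψ' r) s r
  hasDerivWithinAt_deriv : ∀ r ∈ s, HasDerivWithinAt ψ' (w r * ψ r) s r

namespace IsSchrodingerSolOn

variable {w ψ ψ' : ℝ → ℝ} {s : Set ℝ} {a r : ℝ}

lemma continuousOn (h : IsSchrodingerSolOn w ψ ψ' s) : ContinuousOn ψ s :=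
  fun r hr => (h.hasDerivWithinAt r hr).continuousWithinAt

lemma continuousOn_deriv (h : IsSchrodingerSolOn w ψ ψ' s) : ContinuousOn ψ' s :=
  fun r hr => (h.hasDerivWithinAt_deriv r hr).continuousWithinAt

lemma hasDerivAt (h : IsSchrodingerSolOn w ψ ψ' s) (hr : s ∈ 𝓝 r) : HasDerivAt ψ (ψ' r) r :=
  (h.hasDerivWithinAt r (mem_of_mem_nhds hr)).hasDerivAt hr

lemma hasDerivAt_deriv (h : IsSchrodingerSolOn w ψ ψ' s) (hr : s ∈ 𝓝 r) :
    HasDerivAt ψ' (w r * ψ r) r :=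
  (h.hasDerivWithinAt_deriv r (mem_of_mem_nhds hr)).hasDerivAt hr

theorem contDiffOn_two (h : IsSchrodingerSolOn w ψ ψ' s) (hs : UniqueDiffOn ℝ s)
    (hw : ContinuousOn w s) : ContDiffOn ℝ 2 ψ s := by
  have hψ' : ContDiffOn ℝ 1 ψ' s := (contDiffOn_one_iff_derivWithin hs).2
    ⟨fun r hr => (h.hasDerivWithinAt_deriv r hr).differentiableWithinAt,
      (hw.mul h.continuousOn).congr fun r hr =>
        (h.hasDerivWithinAt_deriv r hr).derivWithin (hs r hr)⟩
  rw [← one_add_one_eq_two, contDiffOn_succ_iff_derivWithin hs]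
  exact ⟨fun r hr => (h.hasDerivWithinAt r hr).differentiableWithinAt, by simp,
    hψ'.congr fun r hr => (h.hasDerivWithinAt r hr).derivWithin (hs r hr)⟩

lemma monotoneOn_mul_deriv (h : IsSchrodingerSolOn w ψ ψ' s) (hs : Convex ℝ s)
    (hw : ∀ r ∈ s, 0 ≤ w r) : MonotoneOn (ψ * ψ') s := by
  refine monotoneOn_of_hasDerivWithinAt_nonneg hs (h.continuousOn.mul h.continuousOn_deriv)
    (fun r hr => ((h.hasDerivAt (mem_interior_iff_mem_nhds.1 hr)).mul
      (h.hasDerivAt_deriv (mem_interior_iff_mem_nhds.1 hr))).hasDerivWithinAt) fun r hr => ?_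
  have hwψ : 0 ≤ w r * ψ r ^ 2 := mul_nonneg (hw r (interior_subset hr)) (sq_nonneg _)
  linarith [sq_nonneg (ψ' r)]

lemma monotoneOn_deriv_sq (h : IsSchrodingerSolOn w ψ ψ' (Ici a)) (hw : ∀ r ∈ Ici a, 0 ≤ w r)
    (ha : 0 ≤ ψ a * ψ' a) : MonotoneOn (ψ' ^ 2) (Ici a) := by
  refine monotoneOn_of_hasDerivWithinAt_nonneg (convex_Ici a) (h.continuousOn_deriv.pow 2)
    (fun r hr => ((h.hasDerivAt_deriv (mem_interior_iff_mem_nhds.1 hr)).pow 2).hasDerivWithinAt)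
    fun r hr => ?_
  have har : r ∈ Ici a := interior_subset hr
  have hψψ' : 0 ≤ ψ r * ψ' r :=
    ha.trans (h.monotoneOn_mul_deriv (convex_Ici a) hw self_mem_Ici har har)
  have hwψψ' := mul_nonneg (hw r har) hψψ'
  push_cast
  linarith

section InitialValue

variable (h : IsSchrodingerSolOn w ψ ψ' (Ici a)) (hw : ∀ r ∈ Ici a, 0 ≤ w r)
  (hψ : 0 ≤ ψ a) (hψ' : 0 < ψ' a)

include h hw hψ hψ'

lemma deriv_pos (har : a ≤ r) : 0 < ψ' r := by
  by_contra! hneg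
  obtain ⟨c, hc, hψ'c⟩ := intermediate_value_Icc' har
    (h.continuousOn_deriv.mono Icc_subset_Ici_self) ⟨hneg, hψ'.le⟩
  have hsq : ψ' a ^ 2 ≤ ψ' c ^ 2 :=
    h.monotoneOn_deriv_sq hw (mul_nonneg hψ hψ'.le) self_mem_Ici hc.1 hc.1
  rw [hψ'c] at hsq
  linarith [pow_pos hψ' 2]

lemma deriv_le_deriv (har : a ≤ r) : ψ' a ≤ ψ' r :=
  le_of_sq_le_sq (h.monotoneOn_deriv_sq hw (mul_nonneg hψ hψ'.le) self_mem_Ici har har)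
    (h.deriv_pos hw hψ hψ' har).le

lemma add_mul_sub_le (har : a ≤ r) : ψ a + ψ' a * (r - a) ≤ ψ r := by
  have hderiv : ∀ x ∈ interior (Ici a), HasDerivAt ψ (ψ' x) x := fun x hx =>
    h.hasDerivAt (mem_interior_iff_mem_nhds.1 hx)
  have hle := (convex_Ici a).mul_sub_le_image_sub_of_le_deriv h.continuousOn
    (fun x hx => (hderiv x hx).differentiableAt.differentiableWithinAt)
    (fun x hx => (hderiv x hx).deriv ▸ h.deriv_le_deriv hw hψ hψ' (interior_subset hx))
    a self_mem_Ici r har har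
  linarith

lemma pos (har : a < r) : 0 < ψ r :=
  (add_pos_of_nonneg_of_pos hψ (mul_pos hψ' (sub_pos.2 har))).trans_le
    (h.add_mul_sub_le hw hψ hψ' har.le)

lemma tendsto_atTop : Tendsto ψ atTop atTop := by
  refine tendsto_atTop_mono' _
    ((eventually_ge_atTop a).mono fun r har => h.add_mul_sub_le hw hψ hψ' har) ?_
  exact tendsto_atTop_add_const_left _ _
    ((tendsto_atTop_add_const_right _ _ tendsto_id).const_mul_atTop hψ')

end InitialValue

lemma hasDerivAt_deriv_div_mul (h : IsSchrodingerSolOn w ψ ψ' s) {σ : ℝ → ℝ} {σ' : ℝ}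
    (hr : s ∈ 𝓝 r) (hσ : HasDerivAt σ σ' r) (hψ : ψ r ≠ 0) (hσ0 : σ r ≠ 0) :
    HasDerivAt (fun x => ψ' x / (ψ x * σ x))
      (σ r * (w r / σ r ^ 2 - (ψ' r / (ψ r * σ r)) ^ 2
        - σ' / σ r ^ 2 * (ψ' r / (ψ r * σ r)))) r := by
  refine ((h.hasDerivAt_deriv hr).div ((h.hasDerivAt hr).mul hσ)
    (mul_ne_zero hψ hσ0)).congr_deriv ?_
  simp only [Pi.mul_apply]
  field_simp
  ring

/-- The hypothesis `σ' = o(σ²)` is the WKB condition: `σ ~ √w` varies slowly over its own length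
scale `1 / σ`. -/
theorem tendsto_deriv_div_mul (h : IsSchrodingerSolOn w ψ ψ' (Ici a)) {σ σ' S : ℝ → ℝ}
    (hψ : ∀ᶠ r in atTop, 0 < ψ r) (hψ' : ∀ᶠ r in atTop, 0 ≤ ψ' r)
    (hσ0 : ∀ᶠ r in atTop, 0 < σ r) (hσ : ∀ᶠ r in atTop, HasDerivAt σ (σ' r) r)
    (hσ' : σ' =o[atTop] (σ ^ 2)) (hw : w ~[atTop] (σ ^ 2))
    (hS : ∀ᶠ r in atTop, HasDerivAt S (σ r) r) (hST : Tendsto S atTop atTop) :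
    Tendsto (fun r => ψ' r / (ψ r * σ r)) atTop (𝓝 1) := by
  refine tendsto_one_of_riccati (a := w / σ ^ 2) (b := fun r => σ' r / (σ ^ 2) r) ?_ ?_
    ((isEquivalent_iff_tendsto_one (hσ0.mono fun r hr => (pow_pos hr 2).ne')).1 hw)
    hσ'.tendsto_div_nhds_zero hσ0 hS hST
  · filter_upwards [eventually_gt_atTop a, hψ, hσ0, hσ] with r har hψr hσ0r hσr
    exact h.hasDerivAt_deriv_div_mul (Ici_mem_nhds har) hσr hψr.ne' hσ0r.ne'
  · filter_upwards [hψ, hψ', hσ0] with r hψr hψ'r hσr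
    positivity

end IsSchrodingerSolOn

section PowerPotential

lemma isLittleO_const_mul_rpow {p q : ℝ} (hpq : p < q) (c : ℝ) {d : ℝ} (hd : d ≠ 0) :
    (fun r : ℝ => c * r ^ p) =o[atTop] fun r => d * r ^ q := by
  refine IsLittleO.const_mul_left ((isLittleO_const_mul_right_iff hd).2 ?_) c
  refine isLittleO_of_tendsto' ((eventually_gt_atTop 0).mono fun r hr h0 =>
    absurd h0 (Real.rpow_pos_of_pos hr q).ne') ?_
  refine (tendsto_rpow_neg_atTop (sub_pos.2 hpq)).congr' ?_
  filter_upwards [eventually_gt_atTop 0] with r hr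
  rw [neg_sub, Real.rpow_sub hr]

theorem IsSchrodingerSolOn.tendsto_deriv_div_mul_rpow {w ψ ψ' : ℝ → ℝ} {a Q μ : ℝ}
    (h : IsSchrodingerSolOn w ψ ψ' (Ici a)) (hQ : 0 < Q) (hμ : -1 < μ)
    (hψ : ∀ᶠ r in atTop, 0 < ψ r) (hψ' : ∀ᶠ r in atTop, 0 ≤ ψ' r)
    (hw : w ~[atTop] fun r => Q * r ^ (2 * μ)) :
    Tendsto (fun r => ψ' r / (ψ r * (√Q * r ^ μ))) atTop (𝓝 1) := by
  have hμ1 : 0 < μ + 1 := by linarith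
  have hsq : (fun r : ℝ => Q * r ^ (2 * μ)) =ᶠ[atTop] (fun r => √Q * r ^ μ) ^ 2 := by
    filter_upwards [eventually_ge_atTop 0] with r hr
    rw [Pi.pow_apply, mul_pow, Real.sq_sqrt hQ.le, mul_comm 2 μ, Real.rpow_mul hr,
      Real.rpow_two]
  refine h.tendsto_deriv_div_mul (σ' := fun r => √Q * μ * r ^ (μ - 1))
    (S := fun r => √Q / (μ + 1) * r ^ (μ + 1)) hψ hψ' ?_ ?_
    ((isLittleO_const_mul_rpow (by linarith) _ hQ.ne').trans_eventuallyEq hsq)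
    (hw.trans hsq.isEquivalent) ?_ ((tendsto_rpow_atTop hμ1).const_mul_atTop (by positivity))
  all_goals filter_upwards [eventually_gt_atTop 0] with r hr
  · positivity
  · exact ((Real.hasDerivAt_rpow_const (Or.inl hr.ne')).const_mul √Q).congr_deriv (by ring)
  · refine ((Real.hasDerivAt_rpow_const (Or.inl hr.ne')).const_mul _).congr_deriv ?_
    rw [add_sub_cancel_right]
    field_simp

/-- The potential of the theorem with exponent `p = 2μ`: it vanishes up to `R`, is linear
on `[R, 2R]` and equals `Q r ^ p` from `2R` on. Writing it with `max` and `min` makes its continuity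
and sign visible; `max r (2 * R)` also keeps the base of the power away from `0` when `p < 0`. -/
noncomputable def cutoffPower (R Q p r : ℝ) : ℝ :=
  Q * max r (2 * R) ^ p * max 0 (min 1 ((r - R) / R))

variable {R Q p : ℝ}

lemma cutoffPower_eq_ite (hR : 0 < R) (r : ℝ) :
    cutoffPower R Q p r = if r ≤ R then 0
      else if r ≤ 2 * R then Q * (2 * R) ^ p / R * (r - R) else Q * r ^ p := by
  unfold cutoffPower
  split_ifs with hrR hr2R
  · have hneg : (r - R) / R ≤ 0 := div_nonpos_of_nonpos_of_nonneg (by linarith) hR.le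
    rw [max_eq_left (min_le_of_right_le hneg), mul_zero]
  · have h0 : 0 ≤ (r - R) / R := div_nonneg (by linarith) hR.le
    have h1 : (r - R) / R ≤ 1 := (div_le_one hR).2 (by linarith)
    rw [max_eq_right hr2R, min_eq_right h1, max_eq_right h0]
    ring
  · have h1 : 1 ≤ (r - R) / R := (one_le_div hR).2 (by linarith)
    rw [max_eq_left (by linarith), min_eq_left h1, max_eq_right zero_le_one, mul_one]

lemma cutoffPower_nonneg (hR : 0 ≤ R) (hQ : 0 ≤ Q) (r : ℝ) : 0 ≤ cutoffPower R Q p r :=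
  mul_nonneg (mul_nonneg hQ (Real.rpow_nonneg (le_max_of_le_right (by linarith)) p))
    (le_max_left _ _)

lemma continuous_cutoffPower (hR : 0 < R) : Continuous (cutoffPower R Q p) := by
  refine (continuous_const.mul (Continuous.rpow_const (by fun_prop) fun r => Or.inl ?_)).mul
    (by fun_prop)
  exact (lt_max_of_lt_right (by linarith)).ne'

lemma cutoffPower_eventuallyEq (hR : 0 < R) :
    cutoffPower R Q p =ᶠ[atTop] fun r => Q * r ^ p := by
  filter_upwards [eventually_gt_atTop (2 * R)] with r hr
  rw [cutoffPower_eq_ite hR, if_neg (by linarith), if_neg (by linarith)]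

end PowerPotential

theorem stmt_0_general {Q μ : ℝ} (hQ : 0 < Q) (hμ : -1 < μ) {w ψ ψ' : ℝ → ℝ}
    (hwc : ContinuousOn w (Ici 0)) (hw0 : ∀ r ∈ Ici 0, 0 ≤ w r)
    (hw : w ~[atTop] fun r => Q * r ^ (2 * μ)) (hψ0 : 0 ≤ ψ 0) (hψ'0 : 0 < ψ' 0)
    (h : IsSchrodingerSolOn w ψ ψ' (Ici 0)) :
    ContDiffOn ℝ 2 ψ (Ici 0) ∧ (∀ r > 0, 0 < ψ r) ∧ Tendsto ψ atTop atTop ∧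
      (∀ r ≥ 0, 0 < ψ' r) ∧
      Tendsto (fun r => ψ' r / (ψ r * (√Q * r ^ μ))) atTop (𝓝 1) := by
  have hpos : ∀ r > 0, 0 < ψ r := fun r hr => h.pos hw0 hψ0 hψ'0 hr
  have hpos' : ∀ r ≥ 0, 0 < ψ' r := fun r hr => h.deriv_pos hw0 hψ0 hψ'0 hr
  exact ⟨h.contDiffOn_two (uniqueDiffOn_Ici 0) hwc, hpos, h.tendsto_atTop hw0 hψ0 hψ'0, hpos',
    h.tendsto_deriv_div_mul_rpow hQ hμ ((eventually_gt_atTop 0).mono hpos)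
      ((eventually_ge_atTop 0).mono fun r hr => (hpos' r hr).le) hw⟩

/-- Lemma 4.1 of the paper. Let `R, Q > 0` and `μ ∈ (-1,1]`. Let `ψ` be
the solution of `ψ'' = w ψ` on `[0,∞)` with `ψ(0) = 0`, `ψ'(0) = 1`, where `w` is the
piecewise function vanishing on `[0,R]`, linear on `(R,2R]` and equal to `Q r^{2μ}` beyond.
Then `ψ ∈ C²([0,∞))`, `ψ > 0` on `(0,∞)`, `ψ → +∞`, `ψ' > 0` on `[0,∞)`, and
`ψ'(r)/ψ(r) ∼ √Q · r^μ` as `r → +∞`. -/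
theorem stmt_0
    (R Q μ : ℝ) (hR : 0 < R) (hQ : 0 < Q) (hμ : μ ∈ Set.Ioc (-1 : ℝ) 1)
    (w : ℝ → ℝ)
    (hw : ∀ r : ℝ, 0 ≤ r →
      w r = if r ≤ R then 0
            else if r ≤ 2 * R then Q * (2 * R) ^ (2 * μ) / R * (r - R)
            else Q * r ^ (2 * μ))
    (ψ ψ' : ℝ → ℝ)
    (hψ0 : ψ 0 = 0) (hψ'0 : ψ' 0 = 1)
    (hd1 : ∀ r ∈ Set.Ici (0 : ℝ), HasDerivWithinAt ψ (ψ' r) (Set.Ici 0) r)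
    (hd2 : ∀ r ∈ Set.Ici (0 : ℝ), HasDerivWithinAt ψ' (w r * ψ r) (Set.Ici 0) r) :
    ContDiffOn ℝ 2 ψ (Set.Ici 0) ∧
    (∀ r > (0 : ℝ), 0 < ψ r) ∧
    Filter.Tendsto ψ Filter.atTop Filter.atTop ∧
    (∀ r ≥ (0 : ℝ), 0 < ψ' r) ∧
    Filter.Tendsto (fun r => ψ' r / (ψ r * (Real.sqrt Q * r ^ μ)))
      Filter.atTop (nhds 1) := by
  have hcut : EqOn w (cutoffPower R Q (2 * μ)) (Ici 0) := fun r hr =>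
    (hw r hr).trans (cutoffPower_eq_ite hR r).symm
  exact stmt_0_general hQ hμ.1 (continuous_cutoffPower hR).continuousOn
    (fun r _ => cutoffPower_nonneg hR.le hQ.le r) (cutoffPower_eventuallyEq hR).isEquivalent
    hψ0.ge (hψ'0 ▸ zero_lt_one) ⟨hd1, fun r hr => hcut hr ▸ hd2 r hr⟩
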